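/- Let d ≥ 2 be an integer, let f : S¹ → S¹ be a continuous degree-d map with lift F : ℝ → ℝ, and let β be a light semiconjugacy from f to the map m_d : θ ↦ dθ. Then the following are equivalent: (a) F is not injective; (b) β is not injective; (c) there exists a dense G_δ subset Λ ⊆ S¹ of full Lebesgue measure such that for every θ ∈ Λ the fiber β^{-1}(θ) is totally disconnected and uncountable (hence contains a Cantor set); (d) the topological entropy of f satisfies h_top(f) > log d; (e) for every nondegenerate closed arc J ⊆ S¹, the restriction of β to J is not of bounded variation. -/

import Mathlib

open MeasureTheory

open Dynamics Filter Set Topology Uniformity in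
lemma aux_entropy_lower {X : Type*} [UniformSpace X] [CompactSpace X] (f : X → X) (N : ℕ) (hN : N ≠ 0)
    {ι : Type*} [Fintype ι] (A : ι → Set X) (hA : ∀ i, IsClosed (A i))
    (hdis : ∀ i j x, x ∈ A i → x ∈ A j → i = j)
    (hit : ∀ r (w : Fin r → ι), ∃ x, ∀ k : Fin r, f^[N * k] x ∈ A (w k)) :
    ENNReal.log (Fintype.card ι : ENNReal) ≤ (N : EReal) * coverEntropy f univ := by
  classical
  have hW : (⋂ i, ⋂ j, ⋂ (_ : i ≠ j), ((A i) ×ˢ (A j))ᶜ : Set (X × X)) ∈ 𝓤 X := by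
    rw [← nhdsSet_diagonal_eq_uniformity]
    refine (IsOpen.mem_nhdsSet ?_).2 ?_
    · refine isOpen_iInter_of_finite fun i => isOpen_iInter_of_finite fun j =>
        isOpen_iInter_of_finite fun _ => ((hA i).prod (hA j)).isOpen_compl
    · rintro ⟨x, y⟩ hxy
      have : x = y := by simpa using hxy
      subst this
      simp only [mem_iInter]
      rintro i j hij ⟨h1, h2⟩
      exact hij (hdis i j x h1 h2)
  obtain ⟨V, hV, hVs, hVW⟩ := comp_symm_mem_uniformity_sets hW
  have key : ∀ r : ℕ, ((Fintype.card ι : ENNReal)) ^ r ≤ netMaxcard f univ V (N * r) := by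
    intro r
    choose x hx using hit r
    have hsep : ∀ w w', (∀ k : Fin r, (f^[N * k] (x w'), f^[N * k] (x w)) ∈ SetRel.comp V V) → w = w' := by
      intro w w' h
      ext k
      by_contra hne
      have := hVW (h k)
      simp only [mem_iInter] at this
      exact this (w' k) (w k) (fun h => hne h.symm) ⟨hx w' k, hx w k⟩
    have hinj : Function.Injective x := by
      intro w w' h
      apply hsep
      intro k
      rw [h]
      exact ⟨_, refl_mem_uniformity hV, refl_mem_uniformity hV⟩
    have hnet : IsDynNetIn f univ V (N * r) ((Finset.univ.image x : Finset X) : Set X) := by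
      refine ⟨subset_univ _, ?_⟩
      intro a ha b hb hab
      simp only [Finset.coe_image, Finset.coe_univ, image_univ, mem_range] at ha hb
      obtain ⟨w, rfl⟩ := ha
      obtain ⟨w', rfl⟩ := hb
      by_contra hnd
      rw [Function.onFun, Set.not_disjoint_iff_nonempty_inter] at hnd
      have := mem_ball_dynEntourage_comp f (N * r) (x w) (x w') hnd
      rw [mem_ball_dynEntourage] at this
      apply hab
      rw [hsep w w' fun k => this (N * k) (by
        have := k.2
        exact Nat.mul_lt_mul_of_pos_left this (Nat.pos_of_ne_zero hN))]
    have := hnet.card_le_netMaxcard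
    rw [Finset.card_image_of_injective _ hinj] at this
    have h2 := ENat.toENNReal_mono this
    simpa using h2
  have hmono : Monotone fun n : ℕ => ((netMaxcard f univ V n : ℕ∞) : ENNReal) :=
    fun _ _ h => ENat.toENNReal_mono (netMaxcard_monotone_time f univ V h)
  have h1 := hmono.expGrowthSup_comp_mul hN
  have h2 : ENNReal.log (Fintype.card ι : ENNReal) ≤ (N : EReal) * netEntropyEntourage f univ V := by
    rw [netEntropyEntourage, ← h1, ← ExpGrowth.expGrowthSup_pow]
    apply ExpGrowth.expGrowthSup_monotone
    intro r
    exact key r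
  refine h2.trans ?_
  gcongr
  exact netEntropyEntourage_le_coverEntropy f univ hV

open Dynamics Filter Set Topology Uniformity in
lemma aux_entropy_upper (d : ℕ) (hd : 2 ≤ d) :
    coverEntropy (fun θ : UnitAddCircle => (d : ℤ) • θ) univ ≤ (Real.log d : EReal) := by
  classical
  have hd0 : (0 : ℝ) < d := by positivity
  rw [coverEntropy_eq_iSup_basis Metric.uniformity_basis_dist]
  refine iSup₂_le fun ε hε => ?_
  obtain ⟨M, hM⟩ := exists_nat_gt (1 / ε)
  have hM0 : (0 : ℝ) < M := lt_trans (by positivity) hM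
  have hMε : 1 / (M : ℝ) < ε := by
    rw [div_lt_iff₀ hM0]; rw [div_lt_iff₀ hε] at hM; linarith
  have hlog : ENNReal.log (d : ENNReal) = (Real.log d : EReal) := by
    rw [← ENNReal.ofReal_natCast, ENNReal.log_ofReal_of_pos hd0]
  have hit : ∀ (k : ℕ) (x : UnitAddCircle),
      (fun θ : UnitAddCircle => (d : ℤ) • θ)^[k] x = (d ^ k : ℕ) • x := by
    intro k x
    induction k with
    | zero => simp
    | succ k ih => rw [Function.iterate_succ_apply', ih]; simp [pow_succ', mul_smul]
  rw [← hlog, ← ExpGrowth.expGrowthSup_pow, coverEntropyEntourage]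
  apply ExpGrowth.expGrowthSup_le_of_eventually_le (b := (M : ENNReal)) (by simp)
  refine Eventually.of_forall fun n => ?_
  set L : ℕ := M * d ^ n with hL
  have hL0 : (0 : ℝ) < L := by rw [hL]; push_cast; positivity
  have hcov : IsDynCoverOf (fun θ : UnitAddCircle => (d : ℤ) • θ) univ
      {p : UnitAddCircle × UnitAddCircle | dist p.1 p.2 < ε} n
      (((Finset.range L).image (fun j : ℕ => (((j : ℝ) / L : ℝ) : UnitAddCircle)) : Finset UnitAddCircle) : Set UnitAddCircle) := by
    intro x _
    obtain ⟨y, hy, rfl⟩ : ∃ y ∈ Ico (0 : ℝ) (0 + 1), (y : UnitAddCircle) = x := by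
      have := AddCircle.coe_image_Ico_eq (1 : ℝ) 0
      have hx : x ∈ ((↑) '' Ico (0:ℝ) (0+1) : Set UnitAddCircle) := by rw [this]; trivial
      exact hx
    rw [zero_add] at hy
    refine ⟨(((⌊y * L⌋₊ : ℝ) / L : ℝ) : UnitAddCircle), ?_, ?_⟩
    · simp only [Finset.coe_image, mem_image, Finset.coe_range, mem_Iio]
      refine ⟨⌊y * L⌋₊, ?_, rfl⟩
      rw [Nat.floor_lt (by have := hy.1; positivity)]
      nlinarith [hy.2]
    · rw [mem_dynEntourage]
      intro k hk
      rw [hit, hit]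
      simp only [mem_ofPred_eq]
      rw [dist_eq_norm, ← smul_sub, ← AddCircle.coe_sub, ← AddCircle.coe_nsmul]
      refine lt_of_le_of_lt (QuotientAddGroup.norm_mk_le_norm) ?_
      rw [nsmul_eq_mul, norm_mul, Real.norm_natCast]
      have h1 : ‖y - (⌊y * L⌋₊ : ℝ) / L‖ ≤ 1 / L := by
        have e : y - (⌊y * L⌋₊ : ℝ) / L = (y * L - ⌊y * L⌋₊) / L := by field_simp
        rw [e, norm_div, Real.norm_natCast, Real.norm_eq_abs]
        gcongr
        have := Nat.floor_le (show 0 ≤ y * L by have := hy.1; positivity)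
        have := Nat.lt_floor_add_one (y * L)
        rw [abs_le]; constructor <;> linarith
      calc ((d ^ k : ℕ) : ℝ) * ‖y - (⌊y * L⌋₊ : ℝ) / L‖ ≤ ((d ^ n : ℕ) : ℝ) * (1 / L) := by
            gcongr
            omega
        _ = 1 / M := by rw [hL]; push_cast; field_simp
        _ < ε := hMε
  have h1 := hcov.coverMincard_le_card.trans (Nat.cast_le.2 Finset.card_image_le)
  rw [Finset.card_range] at h1
  have h2 := ENat.toENNReal_mono h1
  rw [hL] at h2
  simpa using h2

structure Aux (d : ℕ) (F B : ℝ → ℝ) : Prop where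
  hd : 2 ≤ d
  Fc : Continuous F
  Bc : Continuous B
  F1 : ∀ x, F (x + 1) = F x + d
  B1 : ∀ x, B (x + 1) = B x + 1
  BF : ∀ x, B (F x) = d * B x
  nc : ∀ a c, a < c → ∃ x ∈ Set.Icc a c, B x ≠ B a

namespace Aux
open Set Filter Topology

variable {d : ℕ} {F B : ℝ → ℝ}

lemma shift_int {G : ℝ → ℝ} {D : ℝ} (h : ∀ x, G (x + 1) = G x + D) (x : ℝ) (k : ℤ) :
    G (x + k) = G x + k * D := by
  induction k using Int.induction_on with
  | zero => simp
  | succ k ih => push_cast at *; rw [← add_assoc, h, ih]; ring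
  | pred k ih =>
    have := h (x + ((-(k:ℤ) - 1 : ℤ) : ℝ))
    rw [show x + ((-(k:ℤ) - 1 : ℤ) : ℝ) + 1 = x + ((-(k:ℤ) : ℤ) : ℝ) by push_cast; ring, ih] at this
    push_cast at *
    linarith

lemma Bk (h : Aux d F B) (x : ℝ) (k : ℤ) : B (x + k) = B x + k := by
  rw [shift_int h.B1]; ring

lemma Fk (h : Aux d F B) (x : ℝ) (k : ℤ) : F (x + k) = F x + k * d := shift_int h.F1 x k

lemma Fnk (h : Aux d F B) (n : ℕ) (x : ℝ) (k : ℤ) : F^[n] (x + k) = F^[n] x + k * d ^ n := by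
  induction n with
  | zero => simp
  | succ n ih =>
    rw [Function.iterate_succ_apply', ih, Function.iterate_succ_apply']
    have := h.Fk (F^[n] x) (k * d ^ n)
    push_cast at this
    rw [this]; ring

lemma BFn (h : Aux d F B) (n : ℕ) (x : ℝ) : B (F^[n] x) = d ^ n * B x := by
  induction n with
  | zero => simp
  | succ n ih => rw [Function.iterate_succ_apply', h.BF, ih]; ring

lemma bdd (h : Aux d F B) : ∃ C, 0 ≤ C ∧ ∀ x, |B x - x| ≤ C := by
  obtain ⟨C, hC⟩ := (isCompact_Icc (a := (0:ℝ)) (b := 1)).exists_bound_of_continuousOn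
    (f := fun x => B x - x) (h.Bc.sub continuous_id).continuousOn
  refine ⟨C, (norm_nonneg _).trans (hC 0 (by simp)), fun x => ?_⟩
  have h1 := hC (Int.fract x) ⟨Int.fract_nonneg x, (Int.fract_lt_one x).le⟩
  have h2 := h.Bk (Int.fract x) ⌊x⌋
  rw [Int.fract_add_floor] at h2
  rw [h2]
  have h3 := Int.fract_add_floor x
  rw [Real.norm_eq_abs] at h1
  convert h1 using 2
  linarith

lemma d1 (h : Aux d F B) : (1 : ℝ) < d := by
  have := h.hd
  exact_mod_cast (by omega : 1 < d)

lemma large (h : Aux d F B) {e : ℝ} (he : 0 < e) (R : ℝ) : ∃ n0, ∀ n ≥ n0, R ≤ d ^ n * e := by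
  have : Tendsto (fun n : ℕ => (d : ℝ) ^ n * e) atTop atTop :=
    (tendsto_pow_atTop_atTop_of_one_lt h.d1).atTop_mul_const he
  obtain ⟨n0, h0⟩ := eventually_atTop.1 (this.eventually_ge_atTop R)
  exact ⟨n0, h0⟩

lemma Fsurj (h : Aux d F B) : Function.Surjective F := by
  intro v
  obtain ⟨k, hk⟩ := exists_nat_gt (|v - F 0|)
  have h1 := h.Fk 0 k
  have h2 := h.Fk 0 (-k)
  have hd := h.d1
  have hk0 : (0:ℝ) ≤ k := by positivity
  obtain ⟨h3, h4⟩ := abs_lt.1 hk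
  push_cast at h1 h2
  have : v ∈ F '' Icc (0 + -(k:ℝ)) (0 + k) := by
    apply intermediate_value_Icc (by linarith) h.Fc.continuousOn
    constructor <;> nlinarith
  obtain ⟨u, -, hu⟩ := this
  exact ⟨u, hu⟩

lemma strictMono_of_monotone (h : Aux d F B) (hm : Monotone B) : StrictMono B := by
  intro a c hac
  refine lt_of_le_of_ne (hm hac.le) fun heq => ?_
  obtain ⟨x, hx, hne⟩ := h.nc a c hac
  exact hne (le_antisymm (heq ▸ hm hx.2) (hm hx.1))

lemma F_inj_of_B (h : Aux d F B) (hB : Function.Injective B) : Function.Injective F := by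
  intro x y hxy
  apply hB
  have h1 := h.BF x
  rw [hxy, h.BF y] at h1
  have := h.d1
  exact (mul_left_cancel₀ (by linarith) h1).symm

lemma B_mono_of_F (h : Aux d F B) (hF : Function.Injective F) : StrictMono B := by
  have hd := h.d1
  have hFm : StrictMono F := by
    rcases h.Fc.strictMono_of_inj hF with hm | hm
    · exact hm
    · have := hm (show (0:ℝ) < 0 + 1 by norm_num)
      rw [h.F1] at this
      linarith
  apply h.strictMono_of_monotone
  intro x y hxy
  by_contra hlt
  push Not at hlt
  obtain ⟨C, hC0, hC⟩ := h.bdd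
  obtain ⟨n, hn⟩ := h.large (sub_pos.2 hlt) (2 * C + 1)
  have h1 := hn n le_rfl
  have h2 := hFm.monotone.iterate n hxy
  have h3 := abs_le.1 (hC (F^[n] x))
  have h4 := abs_le.1 (hC (F^[n] y))
  rw [h.BFn] at h3 h4
  nlinarith

lemma mono_of_Icc (h : Aux d F B) (hm : ∀ x y, 0 ≤ x → x < y → y ≤ 1 → B x ≤ B y) : Monotone B := by
  intro x y hxy
  have hx := h.Bk (Int.fract x) ⌊x⌋
  have hy := h.Bk (Int.fract y) ⌊y⌋
  rw [Int.fract_add_floor] at hx hy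
  rw [hx, hy]
  have fx0 := Int.fract_nonneg x
  have fx1 := Int.fract_lt_one x
  have fy0 := Int.fract_nonneg y
  have fy1 := Int.fract_lt_one y
  have ex := Int.fract_add_floor x
  have ey := Int.fract_add_floor y
  rcases (Int.floor_le_floor hxy).eq_or_lt with he | hlt
  · rw [he] at ex ⊢
    rcases (show Int.fract x ≤ Int.fract y by linarith).eq_or_lt with h1 | h1
    · rw [h1]
    · linarith [hm _ _ fx0 h1 fy1.le]
  · have h1 := hm _ 1 fx0 fx1 le_rfl
    have h2 : B 0 ≤ B (Int.fract y) := by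
      rcases fy0.eq_or_lt with h3 | h3
      · rw [← h3]
      · exact hm 0 _ le_rfl h3 fy1.le
    have h3 := h.B1 0
    rw [zero_add] at h3
    have : (⌊x⌋ : ℝ) + 1 ≤ ⌊y⌋ := by exact_mod_cast hlt
    linarith

/-- the branching lemma -/
lemma branch (h : Aux d F B) {x y : ℝ} (hxy : x < y) (hB : B y < B x) :
    ∃ p q : ℝ, p < q ∧ ∀ T : ℝ, (∃ᶠ n in atTop, ∃ k : ℤ, d ^ n * T - k ∈ Ioo p q) →
      ∃ Φ : (ℕ → Bool) → ℝ, Function.Injective Φ ∧ ∀ ω, B (Φ ω) = T := by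
  obtain ⟨C, hC0, hC⟩ := h.bdd
  set mid := (B x + B y) / 2 with hmid
  obtain ⟨t, ht, htm⟩ : mid ∈ B '' Icc x y := by
    apply intermediate_value_Icc' hxy.le h.Bc.continuousOn
    constructor <;> linarith
  have hty : t < y := by
    refine lt_of_le_of_ne ht.2 ?_
    rintro rfl
    linarith
  obtain ⟨m, hm⟩ := exists_nat_gt (B x - B y)
  have hm0 : (0:ℝ) ≤ m := by positivity
  have hym := h.Bk y m
  push_cast at hym
  set e := (B x - mid) / 4 with he
  have he0 : 0 < e := by rw [he, hmid]; linarith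
  -- the two intervals
  obtain ⟨J, hJord, hJc, hJdis, hJB, R, hR⟩ : ∃ J : Bool → Set ℝ, (∀ b, (J b).OrdConnected) ∧
      (∀ b, IsCompact (J b)) ∧ (∀ b b' v, v ∈ J b → v ∈ J b' → b = b') ∧
      (∀ b, ∀ c ∈ Icc mid (B x), ∃ u ∈ J b, B u = c) ∧
      ∃ R : ℝ, ∀ b, ∀ v ∈ J b, |v| ≤ R := by
    refine ⟨fun b => if b then Icc x t else Icc y (y + m), ?_, ?_, ?_, ?_, |x| + |y + m|, ?_⟩
    · rintro (_ | _) <;> simp <;> exact ordConnected_Icc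
    · rintro (_ | _) <;> simp <;> exact isCompact_Icc
    · rintro (_ | _) (_ | _) v <;> simp <;> intros <;> linarith
    · rintro (_ | _) c hc
      · have : c ∈ B '' Icc y (y + m) := by
          apply intermediate_value_Icc (by linarith) h.Bc.continuousOn
          constructor <;> linarith [hc.1, hc.2]
        simpa using this
      · have : c ∈ B '' Icc x t := by
          apply intermediate_value_Icc' ht.1 h.Bc.continuousOn
          rw [htm]; exact hc
        simpa using this
    · have a1 := abs_le.1 (le_refl |x|)
      have a2 := abs_le.1 (le_refl |y + m|)
      have a3 := abs_nonneg x
      have a4 := abs_nonneg (y + m)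
      have := ht.1
      rintro (_ | _) v <;> simp <;> intros <;> rw [abs_le] <;> constructor <;> linarith
  have hR0 : 0 ≤ R := by
    obtain ⟨u, hu, -⟩ := hJB true (B x) ⟨by linarith, le_rfl⟩
    exact (abs_nonneg _).trans (hR _ _ hu)
  refine ⟨mid + e, B x - e, by linarith, fun T hT => ?_⟩
  set S := |mid| + |B x| with hS
  have hSb : ∀ c ∈ Ioo (mid + e) (B x - e), |c| ≤ S := by
    intro c hc
    have a1 := abs_le.1 (le_refl |mid|)
    have a2 := abs_le.1 (le_refl |B x|)
    have a3 := abs_nonneg mid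
    have a4 := abs_nonneg (B x)
    rw [abs_le, hS]; constructor <;> linarith [hc.1, hc.2]
  obtain ⟨n0, hn0⟩ := h.large he0 (C + R + S)
  -- covering step
  have step : ∀ n ≥ n0, ∀ (T' : ℝ) (k k' : ℤ) (b b' : Bool),
      T' - k ∈ Ioo (mid + e) (B x - e) → d ^ n * T' - k' ∈ Ioo (mid + e) (B x - e) →
      ∀ v : ℝ, v - k' ∈ J b' → ∃ u : ℝ, u - k ∈ J b ∧ F^[n] u = v := by
    intro n hn T' k k' b b' hT1 hT2 v hv
    obtain ⟨u1, hu1, hBu1⟩ := hJB b (T' - k - e) ⟨by linarith [hT1.1], by linarith [hT1.2]⟩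
    obtain ⟨u2, hu2, hBu2⟩ := hJB b (T' - k + e) ⟨by linarith [hT1.1], by linarith [hT1.2]⟩
    have b1 := abs_le.1 (hC (F^[n] (u1 + k)))
    have b2 := abs_le.1 (hC (F^[n] (u2 + k)))
    rw [h.BFn, h.Bk, hBu1] at b1
    rw [h.BFn, h.Bk, hBu2] at b2
    have b3 := abs_le.1 (hR _ _ hv)
    have b4 := abs_le.1 (hSb _ hT2)
    have b5 := hn0 n hn
    have hcont : Continuous (fun w : ℝ => F^[n] (w + k)) :=
      (h.Fc.iterate n).comp (continuous_id.add continuous_const)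
    have : v ∈ (fun w : ℝ => F^[n] (w + k)) '' uIcc u1 u2 := by
      apply intermediate_value_uIcc hcont.continuousOn
      apply Icc_subset_uIcc
      constructor <;> nlinarith
    obtain ⟨u, hu, huv⟩ := this
    refine ⟨u + k, ?_, huv⟩
    have := (hJord b).uIcc_subset hu1 hu2 hu
    simpa using this
  -- times
  rw [frequently_atTop] at hT
  choose g hg hgk using hT
  choose κ hκ using hgk
  obtain ⟨τ, hτ⟩ : ∃ τ : ℕ → ℕ, ∀ i, τ (i + 1) = g (τ i + n0 + 1) + 0 * i ∧ ∃ a, τ i = g a := by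
    let τ : ℕ → ℕ := fun i => Nat.rec (g 0) (fun _ m => g (m + n0 + 1)) i
    refine ⟨τ, fun i => ⟨by simp [τ], ?_⟩⟩
    cases i with
    | zero => exact ⟨0, rfl⟩
    | succ i => exact ⟨_, rfl⟩
  have hτ1 : ∀ i, τ i + n0 + 1 ≤ τ (i + 1) := fun i => by
    have := (hτ i).1
    have := hg (τ i + n0 + 1)
    omega
  have hτk : ∀ i, ∃ k : ℤ, d ^ (τ i) * T - k ∈ Ioo (mid + e) (B x - e) := fun i => by
    obtain ⟨a, ha⟩ := (hτ i).2
    exact ⟨κ a, ha ▸ hκ a⟩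
  choose k hk using hτk
  have hτi : ∀ i, i ≤ τ i := by
    intro i
    induction i with
    | zero => simp
    | succ i ih => have := hτ1 i; omega
  have hτm : Monotone τ := monotone_nat_of_le_succ fun i => by have := hτ1 i; omega
  have main : ∀ ω : ℕ → Bool, ∃ u : ℝ, ∀ i, F^[τ i] u - k i ∈ J (ω i) := by
    intro ω
    have fin : ∀ i, ∀ v : ℝ, v - k i ∈ J (ω i) →
        ∃ u, (∀ j ≤ i, F^[τ j - τ 0] u - k j ∈ J (ω j)) ∧ F^[τ i - τ 0] u = v := by
      intro i
      induction i with
      | zero => intro v hv; exact ⟨v, by simpa using hv, by simp⟩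
      | succ i ih =>
        intro v hv
        obtain ⟨v', hv', hvv⟩ := step (τ (i+1) - τ i) (by have := hτ1 i; omega) (d ^ τ i * T) (k i)
          (k (i+1)) (ω i) (ω (i+1)) (hk i) (by
            rw [← mul_assoc, ← pow_add, Nat.sub_add_cancel (hτm (Nat.le_succ i))]
            exact hk (i+1)) v hv
        obtain ⟨u, hu, huv⟩ := ih v' hv'
        have e1 : F^[τ (i+1) - τ 0] u = v := by
          rw [show τ (i+1) - τ 0 = (τ (i+1) - τ i) + (τ i - τ 0) by
            have := hτ1 i
            have := hτm (Nat.zero_le i)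
            omega, Function.iterate_add_apply, huv, hvv]
        refine ⟨u, fun j hj => ?_, e1⟩
        rcases Nat.lt_or_ge i j with hij | hij
        · have : j = i + 1 := by omega
          subst this
          rw [e1]; exact hv
        · exact hu j hij
    have hclosed : ∀ j, IsClosed {u : ℝ | F^[τ j - τ 0] u - k j ∈ J (ω j)} := fun j =>
      (hJc (ω j)).isClosed.preimage ((h.Fc.iterate _).sub continuous_const)
    let Sx : ℕ → Set ℝ := fun i => {u | ∀ j ≤ i, F^[τ j - τ 0] u - k j ∈ J (ω j)}
    have hSclosed : ∀ i, IsClosed (Sx i) := fun i => by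
      have : Sx i = ⋂ j, ⋂ (_ : j ≤ i), {u : ℝ | F^[τ j - τ 0] u - k j ∈ J (ω j)} := by
        ext u; simp [Sx]
      rw [this]
      exact isClosed_iInter fun j => isClosed_iInter fun _ => hclosed j
    have hne : (⋂ i, Sx i).Nonempty := by
      apply IsCompact.nonempty_iInter_of_sequence_nonempty_isCompact_isClosed
      · intro i u hu j hj
        exact hu j (by omega)
      · intro i
        obtain ⟨c, hc, -⟩ := hJB (ω i) (B x) ⟨by linarith, le_rfl⟩
        obtain ⟨u, hu, -⟩ := fin i (c + k i) (by simpa using hc)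
        exact ⟨u, hu⟩
      · apply Metric.isCompact_of_isClosed_isBounded (hSclosed 0)
        refine (Metric.isBounded_Icc (-R + k 0 : ℝ) (R + k 0)).subset fun u hu => ?_
        have := abs_le.1 (hR _ _ (hu 0 le_rfl))
        simp at this
        constructor <;> linarith [this.1, this.2]
      · exact hSclosed
    obtain ⟨u0, hu0⟩ := hne
    obtain ⟨u, hu⟩ := (h.Fsurj.iterate (τ 0)) u0
    refine ⟨u, fun i => ?_⟩
    have := mem_iInter.1 hu0 i i le_rfl
    rw [← hu, ← Function.iterate_add_apply, Nat.sub_add_cancel (hτm (Nat.zero_le i))] at this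
    exact this
  choose Φ hΦ using main
  refine ⟨Φ, ?_, ?_⟩
  · intro ω ω' hω
    ext1 i
    refine hJdis _ _ _ (hΦ ω i) ?_
    rw [hω]; exact hΦ ω' i
  · intro ω
    by_contra hne
    obtain ⟨n, hn⟩ := h.large (abs_pos.2 (sub_ne_zero.2 hne)) (R + S + C + 1)
    have h1 := hn (τ n) (hτi n)
    have b1 := abs_le.1 (hC (F^[τ n] (Φ ω)))
    have b2 := abs_le.1 (hR _ _ (hΦ ω n))
    have b3 := abs_le.1 (hSb _ (hk n))
    rw [h.BFn] at b1
    have hp : (0:ℝ) ≤ (d:ℝ) ^ τ n := by positivity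
    have b4 : |(d:ℝ) ^ τ n * (B (Φ ω) - T)| ≤ R + S + C := by
      rw [abs_le]; constructor <;> linarith
    rw [abs_mul, abs_of_nonneg hp] at b4
    linarith


/-- The horseshoe lemma. -/
lemma horseshoe (h : Aux d F B) (hF0 : F 0 = 0) {x y : ℝ} (hx0 : 0 ≤ x) (hxy : x < y) (hy1 : y ≤ 1)
    (hB : B y < B x) :
    ∃ N : ℕ, N ≠ 0 ∧ ∃ s1 s2 : Finset ℤ, d ^ N < Fintype.card (s1 ⊕ s2) ∧
      ∃ (A : (s1 ⊕ s2) → Set ℝ) (μ : (s1 ⊕ s2) → ℤ), (∀ i, IsCompact (A i)) ∧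
      (∀ i, (A i).Nonempty) ∧
      (∀ i j v, v ∈ A i → v ∈ A j → i = j) ∧ (∀ i, A i ⊆ Ioo 0 1) ∧
      ∀ i j, ∀ v ∈ A j, ∃ u ∈ A i, F^[N] u = v + μ i := by
  obtain ⟨C, hC0, hC⟩ := h.bdd
  obtain ⟨n0, hn0⟩ := h.large (sub_pos.2 hB) (2 * C + 10)
  set N := n0 + 1 with hN
  have h1 := hn0 N (by omega)
  set g := F^[N] with hg
  have gc : Continuous g := h.Fc.iterate N
  have b1 := abs_le.1 (hC (g x))
  have b2 := abs_le.1 (hC (g y))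
  rw [hg, h.BFn] at b1 b2
  rw [← hg] at b1 b2
  have hgxy : g y + 10 ≤ g x := by linarith
  have g0 : g 0 = 0 := by
    rw [hg]; exact Function.iterate_fixed hF0 N
  have g1 : g 1 = (d : ℝ) ^ N := by
    have := h.Fnk N 0 1
    rw [← hg, g0] at this
    simpa using this
  obtain ⟨a, ha0, hay, hah, hag⟩ : ∃ a, 0 < a ∧ a < y ∧ a < 1 / 2 ∧ ∀ u ∈ Icc 0 a, g u < 1 := by
    have : ∀ᶠ u in 𝓝 (0:ℝ), g u < 1 := gc.continuousAt.eventually (by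
      rw [g0]; exact gt_mem_nhds one_pos)
    obtain ⟨ε, hε, hε'⟩ := Metric.eventually_nhds_iff.1 this
    refine ⟨min (ε / 2) (min (y / 2) (1 / 4)), ?_, ?_, ?_, ?_⟩
    · have : 0 < y := by linarith
      positivity
    · have : min (ε / 2) (min (y / 2) (1 / 4)) ≤ y / 2 := (min_le_right _ _).trans (min_le_left _ _)
      linarith
    · have : min (ε / 2) (min (y / 2) (1 / 4)) ≤ 1 / 4 := (min_le_right _ _).trans (min_le_right _ _)
      linarith
    · intro u hu
      apply hε'
      have : u ≤ ε / 2 := hu.2.trans (min_le_left _ _)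
      rw [Real.dist_eq, sub_zero, abs_of_nonneg hu.1]
      linarith
  obtain ⟨b, hb1, hbx, hbh, hbg⟩ : ∃ b, b < 1 ∧ x < b ∧ 1 / 2 < b ∧
      ∀ u ∈ Icc b 1, (d:ℝ) ^ N - 1 < g u := by
    have : ∀ᶠ u in 𝓝 (1:ℝ), (d:ℝ) ^ N - 1 < g u := gc.continuousAt.eventually (by
      rw [g1]; exact lt_mem_nhds (by linarith))
    obtain ⟨ε, hε, hε'⟩ := Metric.eventually_nhds_iff.1 this
    have hx1 : 0 < 1 - x := by linarith
    refine ⟨1 - min (ε / 2) (min ((1 - x) / 2) (1 / 4)), ?_, ?_, ?_, ?_⟩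
    · have : 0 < min (ε / 2) (min ((1 - x) / 2) (1 / 4)) := by positivity
      linarith
    · have : min (ε / 2) (min ((1 - x) / 2) (1 / 4)) ≤ (1 - x) / 2 :=
        (min_le_right _ _).trans (min_le_left _ _)
      linarith
    · have : min (ε / 2) (min ((1 - x) / 2) (1 / 4)) ≤ 1 / 4 :=
        (min_le_right _ _).trans (min_le_right _ _)
      linarith
    · intro u hu
      apply hε'
      have := hu.1
      have : min (ε / 2) (min ((1 - x) / 2) (1 / 4)) ≤ ε / 2 := min_le_left _ _
      rw [Real.dist_eq, abs_sub_comm, abs_of_nonneg (by linarith [hu.2])]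
      linarith
  refine ⟨N, by omega, Finset.Icc 1 (⌊g x⌋ - 1), Finset.Icc ⌈g y⌉ ((d:ℤ) ^ N - 2), ?_, ?_⟩
  · rw [Fintype.card_sum, Fintype.card_coe, Fintype.card_coe, Int.card_Icc, Int.card_Icc]
    have f1 := Int.lt_floor_add_one (g x)
    have f2 := Int.ceil_lt_add_one (g y)
    have : (⌈g y⌉ : ℝ) + 7 < ⌊g x⌋ := by linarith
    have : ⌈g y⌉ + 7 < ⌊g x⌋ := by exact_mod_cast this
    zify
    have k1 := Int.self_le_toNat (⌊g x⌋ - 1 + 1 - 1)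
    have k2 := Int.self_le_toNat ((d:ℤ) ^ N - 2 + 1 - ⌈g y⌉)
    linarith
  · let μ : (Finset.Icc 1 (⌊g x⌋ - 1) ⊕ Finset.Icc ⌈g y⌉ ((d:ℤ) ^ N - 2)) → ℤ :=
      Sum.elim (fun m => m.1) (fun m => m.1)
    let P : (Finset.Icc 1 (⌊g x⌋ - 1) ⊕ Finset.Icc ⌈g y⌉ ((d:ℤ) ^ N - 2)) → Set ℝ :=
      Sum.elim (fun _ => Icc 0 x) (fun _ => Icc y 1)
    let A : (Finset.Icc 1 (⌊g x⌋ - 1) ⊕ Finset.Icc ⌈g y⌉ ((d:ℤ) ^ N - 2)) → Set ℝ :=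
      fun i => P i ∩ g ⁻¹' (Icc (μ i + a) (μ i + b))
    have hsub : ∀ i, A i ⊆ Icc a b := by
      rintro (⟨m, hm⟩ | ⟨m, hm⟩) u ⟨hu, hgu⟩
      · simp only [P, Sum.elim_inl] at hu
        simp only [μ, Sum.elim_inl, mem_preimage] at hgu
        refine ⟨?_, by linarith [hu.2]⟩
        by_contra hlt
        push Not at hlt
        have := hag u ⟨hu.1, hlt.le⟩
        have hm1 : (1:ℝ) ≤ m := by exact_mod_cast (Finset.mem_Icc.1 hm).1
        linarith [hgu.1]
      · simp only [P, Sum.elim_inr] at hu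
        simp only [μ, Sum.elim_inr, mem_preimage] at hgu
        refine ⟨by linarith [hu.1], ?_⟩
        by_contra hlt
        push Not at hlt
        have := hbg u ⟨hlt.le, hu.2⟩
        have hm1 : (m:ℝ) ≤ (d:ℝ) ^ N - 2 := by exact_mod_cast (Finset.mem_Icc.1 hm).2
        linarith [hgu.2]
    have hcov : ∀ i, ∀ v ∈ Icc a b, ∃ u ∈ A i, g u = v + μ i := by
      rintro (⟨m, hm⟩ | ⟨m, hm⟩) v hv
      · have hm1 : (1:ℝ) ≤ m := by exact_mod_cast (Finset.mem_Icc.1 hm).1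
        have hm2 : (m:ℝ) ≤ ⌊g x⌋ - 1 := by exact_mod_cast (Finset.mem_Icc.1 hm).2
        have hfl := Int.floor_le (g x)
        have : v + m ∈ g '' Icc 0 x := by
          apply intermediate_value_Icc hx0 gc.continuousOn
          constructor <;> linarith [hv.1, hv.2]
        obtain ⟨u, hu, huv⟩ := this
        refine ⟨u, ⟨hu, ?_⟩, huv⟩
        simp only [μ, Sum.elim_inl, mem_preimage, huv]
        constructor <;> linarith [hv.1, hv.2]
      · have hm1 : (⌈g y⌉:ℝ) ≤ m := by exact_mod_cast (Finset.mem_Icc.1 hm).1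
        have hm2 : (m:ℝ) ≤ (d:ℝ) ^ N - 2 := by exact_mod_cast (Finset.mem_Icc.1 hm).2
        have hfl := Int.le_ceil (g y)
        have : v + m ∈ g '' Icc y 1 := by
          apply intermediate_value_Icc hy1 gc.continuousOn
          constructor <;> linarith [hv.1, hv.2]
        obtain ⟨u, hu, huv⟩ := this
        refine ⟨u, ⟨hu, ?_⟩, huv⟩
        simp only [μ, Sum.elim_inr, mem_preimage, huv]
        constructor <;> linarith [hv.1, hv.2]
    refine ⟨A, μ, ?_, ?_, ?_, ?_, ?_⟩
    · intro i
      refine IsCompact.inter_right ?_ (isClosed_Icc.preimage gc)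
      rcases i with _ | _ <;> exact isCompact_Icc
    · intro i
      obtain ⟨u, hu, -⟩ := hcov i a ⟨le_rfl, by linarith⟩
      exact ⟨u, hu⟩
    · have hInt : ∀ (m m' : ℤ) (w : ℝ), w ∈ Icc (m + a) (m + b) → w ∈ Icc (m' + a) (m' + b) →
          m = m' := by
        intro m m' w hw hw'
        have k1 : (m : ℝ) < m' + 1 := by linarith [hw.1, hw'.2]
        have k2 : (m' : ℝ) < m + 1 := by linarith [hw'.1, hw.2]
        have k1 : m < m' + 1 := by exact_mod_cast k1
        have k2 : m' < m + 1 := by exact_mod_cast k2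
        omega
      rintro (⟨m, hm⟩ | ⟨m, hm⟩) (⟨m', hm'⟩ | ⟨m', hm'⟩) v ⟨hv1, hv2⟩ ⟨hv3, hv4⟩
      · have := hInt m m' (g v) hv2 hv4
        subst this; rfl
      · exfalso
        have : v ≤ x := hv1.2
        have : y ≤ v := hv3.1
        linarith
      · exfalso
        have : v ≤ x := hv3.2
        have : y ≤ v := hv1.1
        linarith
      · have := hInt m m' (g v) hv2 hv4
        subst this; rfl
    · intro i u hu
      have := hsub i hu
      exact ⟨by linarith [this.1], by linarith [this.2]⟩
    · intro i j v hv
      exact hcov i v (hsub j hv)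

lemma var_cover {G : ℝ → ℝ} (hG : Continuous G) {u v s t : ℝ} (huv : u ≤ v) (hu : G u ≤ s)
    (hv : t ≤ G v) : eVariationOn B (Icc s t) ≤ eVariationOn (B ∘ G) (Icc u v) := by
  let Z : ℝ → Set ℝ := fun w => Icc u v ∩ {x | w ≤ G x}
  let φ : ℝ → ℝ := fun w => sInf (Z w)
  have hZb : ∀ w, BddBelow (Z w) := fun w => ⟨u, fun x hx => hx.1.1⟩
  have hZc : ∀ w, IsClosed (Z w) := fun w => isClosed_Icc.inter (isClosed_le continuous_const hG)
  have hZn : ∀ w ∈ Icc s t, (Z w).Nonempty := fun w hw => ⟨v, ⟨huv, le_rfl⟩, hw.2.trans hv⟩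
  have hφ : ∀ w ∈ Icc s t, φ w ∈ Z w := fun w hw => (hZc w).csInf_mem (hZn w hw) (hZb w)
  have hGφ : ∀ w ∈ Icc s t, G (φ w) = w := by
    intro w hw
    have h1 := hφ w hw
    refine le_antisymm ?_ h1.2
    by_contra hlt
    push Not at hlt
    obtain ⟨x, hx, hxw⟩ : w ∈ G '' Icc u (φ w) :=
      intermediate_value_Icc h1.1.1 hG.continuousOn ⟨hu.trans hw.1, hlt.le⟩
    have h2 : φ w ≤ x := csInf_le (hZb w) ⟨⟨hx.1, hx.2.trans h1.1.2⟩, hxw.ge⟩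
    have : x = φ w := le_antisymm hx.2 h2
    rw [this] at hxw
    linarith
  have hmono : MonotoneOn φ (Icc s t) := by
    intro w hw w' hw' hww
    exact csInf_le_csInf (hZb w) (hZn w' hw') fun x hx => ⟨hx.1, hww.trans hx.2⟩
  have h1 := eVariationOn.comp_le_of_monotoneOn (B ∘ G) φ hmono (fun w hw => (hφ w hw).1)
  refine le_trans (le_of_eq ?_) h1
  apply eVariationOn.congr
  intro w hw
  simp [hGφ w hw]

lemma var_cover' {G : ℝ → ℝ} (hG : Continuous G) {u v s t : ℝ} (huv : u ≤ v) (hu : t ≤ G u)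
    (hv : G v ≤ s) : eVariationOn B (Icc s t) ≤ eVariationOn (B ∘ G) (Icc u v) := by
  refine (var_cover (B := B) (G := fun x => G (-x)) (hG.comp continuous_neg) (u := -v) (v := -u)
    (by linarith) (by simpa using hv) (by simpa using hu)).trans ?_
  refine eVariationOn.comp_le_of_antitoneOn (B ∘ G) (fun x : ℝ => -x)
    (fun a _ b _ hab => by simpa using hab) (fun x hx => ⟨?_, ?_⟩)
  · linarith [hx.2]
  · linarith [hx.1]

lemma var_shift (h : Aux d F B) (s t : ℝ) (k : ℤ) :
    eVariationOn B (Icc (s + k) (t + k)) = eVariationOn B (Icc s t) := by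
  have key : ∀ (s t : ℝ) (k : ℤ), eVariationOn B (Icc s t) ≤ eVariationOn B (Icc (s + k) (t + k)) := by
    intro s t k
    have h1 := eVariationOn.comp_le_of_monotoneOn B (fun x : ℝ => x + k) (s := Icc (s + k) (t + k))
      (t := Icc s t)
      (fun a _ b _ hab => by simpa using hab) (fun x hx => ⟨by simpa using hx.1, by simpa using hx.2⟩)
    refine le_trans (le_of_eq ?_) h1
    have : (B ∘ fun x : ℝ => x + k) = fun x => B x + k := by
      ext x; exact h.Bk x k
    rw [this]
    simp only [eVariationOn, edist_add_right]
  apply le_antisymm _ (key s t k)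
  have := key (s + k) (t + k) (-k)
  simpa using this

lemma var_add {s t r : ℝ} (hst : s ≤ t) (htr : t ≤ r) :
    eVariationOn B (Icc s r) = eVariationOn B (Icc s t) + eVariationOn B (Icc t r) := by
  have := eVariationOn.Icc_add_Icc B (s := univ) hst htr (mem_univ _)
  simpa using this.symm

lemma var_unit (h : Aux d F B) (s x : ℝ) :
    eVariationOn B (Icc s (s + 1)) = eVariationOn B (Icc x (x + 1)) := by
  set m := ⌊s - x⌋ with hm
  have h1 := Int.floor_le (s - x)
  have h2 := Int.lt_floor_add_one (s - x)
  rw [← hm] at h1 h2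
  rw [var_add (B := B) (s := s) (t := x + m + 1) (r := s + 1) (by linarith) (by linarith)]
  have h3 := h.var_shift (x + m) s 1
  have h4 := h.var_shift x (x + 1) m
  push_cast at h3
  rw [h3, ← h4, show x + 1 + (m:ℝ) = x + m + 1 by ring,
    var_add (B := B) (s := x + m) (t := s) (r := x + m + 1) (by linarith) (by linarith), add_comm]

lemma var_mul (h : Aux d F B) (s x : ℝ) (n : ℕ) :
    eVariationOn B (Icc s (s + n)) = n * eVariationOn B (Icc x (x + 1)) := by
  induction n with
  | zero => simp
  | succ n ih =>
    rw [var_add (B := B) (s := s) (t := s + n) (by simp) (by push_cast; linarith), ih]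
    push_cast
    rw [← add_assoc, h.var_unit (s + n) x]; ring

lemma scale (n : ℝ) (hn : 0 ≤ n) (s : Set ℝ) :
    eVariationOn (fun x => n * B x) s ≤ ENNReal.ofReal n * eVariationOn B s := by
  have hL : LipschitzOnWith n.toNNReal (fun y : ℝ => n * y) univ := by
    refine LipschitzOnWith.of_dist_le_mul fun x _ y _ => ?_
    rw [Real.dist_eq, Real.dist_eq, ← mul_sub, abs_mul, abs_of_nonneg hn, Real.coe_toNNReal _ hn]
  exact hL.comp_eVariationOn_le (fun _ _ => mem_univ _)

lemma not_bv (h : Aux d F B) {x y : ℝ} (hxy : x < y) (hy1 : y ≤ x + 1) (hFxy : F y ≤ F x)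
    {a c : ℝ} (hac : a < c) : ¬ BoundedVariationOn B (Icc a c) := by
  intro hbv
  obtain ⟨C, hC0, hC⟩ := h.bdd
  have hd := h.d1
  -- finite variation on a unit interval
  have hfin : eVariationOn B (Icc x (x + 1)) ≠ ⊤ := by
    obtain ⟨v, hv, hne⟩ := h.nc a c hac
    obtain ⟨n, hn⟩ := h.large (abs_pos.2 (sub_ne_zero.2 hne)) (2 * C + 1)
    have h1 := hn n le_rfl
    have b1 := abs_le.1 (hC (F^[n] a))
    have b2 := abs_le.1 (hC (F^[n] v))
    rw [h.BFn] at b1 b2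
    have hcomp : B ∘ F^[n] = fun x => (d:ℝ) ^ n * B x := by ext x; exact h.BFn n x
    have hfin2 : eVariationOn (B ∘ F^[n]) (Icc a v) ≠ ⊤ := by
      rw [hcomp]
      refine ne_top_of_le_ne_top ?_ (scale _ (by positivity) _)
      refine ENNReal.mul_ne_top ENNReal.ofReal_ne_top ?_
      exact ne_top_of_le_ne_top hbv (eVariationOn.mono _ (Icc_subset_Icc le_rfl hv.2))
    rcases le_total (B a) (B v) with hle | hle
    · rw [abs_of_nonneg (by linarith)] at h1
      rw [h.var_unit x (F^[n] a)]
      exact ne_top_of_le_ne_top hfin2 (var_cover (h.Fc.iterate n) hv.1 le_rfl (by nlinarith))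
    · rw [abs_of_nonpos (by linarith)] at h1
      rw [h.var_unit x (F^[n] v)]
      exact ne_top_of_le_ne_top hfin2 (var_cover' (h.Fc.iterate n) hv.1 (by nlinarith) le_rfl)
  have hcomp : B ∘ F = fun x => (d:ℝ) * B x := by ext x; exact h.BF x
  have e1 : eVariationOn (B ∘ F) (Icc x (x + 1)) ≤ d * eVariationOn B (Icc x (x + 1)) := by
    rw [hcomp]
    refine (scale _ (by positivity) _).trans ?_
    simp
  have e2 : d * eVariationOn B (Icc x (x + 1)) ≤ eVariationOn (B ∘ F) (Icc y (x + 1)) := by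
    rw [← h.var_mul (F x) x d]
    exact var_cover h.Fc hy1 hFxy (by rw [h.F1])
  rw [var_add (B := B ∘ F) hxy.le hy1] at e1
  have hne : eVariationOn (B ∘ F) (Icc x y) ≠ 0 := by
    obtain ⟨v, hv, hne⟩ := h.nc x y hxy
    intro h0
    have := eVariationOn.edist_le (B ∘ F) hv (left_mem_Icc.2 hxy.le)
    rw [h0, hcomp] at this
    have := edist_le_zero.1 this
    exact hne (mul_left_cancel₀ (by linarith) this)
  have hfin' : d * eVariationOn B (Icc x (x + 1)) ≠ ⊤ :=
    ENNReal.mul_ne_top (by simp) hfin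
  have e3 := (add_le_add_right e2 (eVariationOn (B ∘ F) (Icc x y))).trans e1
  have e4 : eVariationOn (B ∘ F) (Icc x y) + d * eVariationOn B (Icc x (x + 1)) ≤
    0 + d * eVariationOn B (Icc x (x + 1)) := by rw [zero_add]; exact e3
  exact hne (le_antisymm ((ENNReal.add_le_add_iff_right hfin').1 e4) bot_le)

end Aux

lemma aux_coe_eq {a b : ℝ} (h : (a : UnitAddCircle) = (b : UnitAddCircle)) :
    ∃ k : ℤ, a = b + k := by
  rw [← sub_eq_zero, ← AddCircle.coe_sub, AddCircle.coe_eq_zero_iff] at h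
  obtain ⟨n, hn⟩ := h
  refine ⟨n, ?_⟩
  simp at hn
  linarith

lemma aux_coe_int (k : ℤ) : ((k : ℝ) : UnitAddCircle) = 0 := by
  rw [AddCircle.coe_eq_zero_iff]
  exact ⟨k, by simp⟩

lemma aux_surj {G : ℝ → ℝ} {D : ℝ} (hG : Continuous G) (hD : 1 ≤ D)
    (h : ∀ x, G (x + 1) = G x + D) : Function.Surjective G := by
  intro v
  obtain ⟨k, hk⟩ := exists_nat_gt (|v - G 0|)
  have h1 := Aux.shift_int h 0 k
  have h2 := Aux.shift_int h 0 (-k)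
  have hk0 : (0:ℝ) ≤ k := by positivity
  obtain ⟨h3, h4⟩ := abs_lt.1 hk
  push_cast at h1 h2
  have : v ∈ G '' Set.Icc (0 + -(k:ℝ)) (0 + k) := by
    apply intermediate_value_Icc (by linarith) hG.continuousOn
    constructor <;> nlinarith
  obtain ⟨u, -, hu⟩ := this
  exact ⟨u, hu⟩

open Filter Set Topology in
lemma aux_recurrent (d : ℕ) (hd : 2 ≤ d) {U : Set UnitAddCircle} (hU : IsOpen U) (hne : U.Nonempty) :
    Dense {θ : UnitAddCircle | ∃ᶠ n in atTop, (d ^ n : ℕ) • θ ∈ U} ∧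
    IsGδ {θ : UnitAddCircle | ∃ᶠ n in atTop, (d ^ n : ℕ) • θ ∈ U} ∧
    volume {θ : UnitAddCircle | ∃ᶠ n in atTop, (d ^ n : ℕ) • θ ∈ U}ᶜ = 0 := by
  set Λ := {θ : UnitAddCircle | ∃ᶠ n in atTop, (d ^ n : ℕ) • θ ∈ U} with hΛ
  have hGδ : IsGδ Λ := by
    have : Λ = ⋂ m : ℕ, ⋃ n : ℕ, ⋃ (_ : m ≤ n), (fun θ : UnitAddCircle => (d ^ n : ℕ) • θ) ⁻¹' U := by
      ext θ
      simp [hΛ, frequently_atTop]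
    rw [this]
    refine IsGδ.iInter_of_isOpen fun m => isOpen_iUnion fun n => isOpen_iUnion fun _ => ?_
    exact hU.preimage (continuous_nsmul _)
  have herg : Ergodic (fun θ : UnitAddCircle => d • θ) volume := AddCircle.ergodic_nsmul (by omega)
  have hit : ∀ (k : ℕ) (x : UnitAddCircle),
      (fun θ : UnitAddCircle => d • θ)^[k] x = (d ^ k : ℕ) • x := by
    intro k x
    induction k with
    | zero => simp
    | succ k ih => rw [Function.iterate_succ_apply', ih]; simp [pow_succ', mul_smul]
  have hinv : (fun θ : UnitAddCircle => d • θ) ⁻¹' Λ = Λ := by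
    ext θ
    simp only [mem_preimage, hΛ, mem_ofPred_eq]
    have e : ∀ n : ℕ, (d ^ n : ℕ) • (d • θ) = (d ^ (n + 1) : ℕ) • θ := fun n => by
      rw [pow_succ, mul_smul]
    simp only [e]
    rw [← Filter.frequently_map (m := fun n => n + 1) (P := fun n => (d ^ n : ℕ) • θ ∈ U),
      Filter.map_add_atTop_eq_nat]
  have hvol : volume Λᶜ = 0 := by
    rcases herg.toPreErgodic.ae_empty_or_univ hGδ.measurableSet hinv with h | h
    · exfalso
      have hpos : volume U ≠ 0 := (hU.measure_pos volume hne).ne'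
      have hrec := (herg.toMeasurePreserving.conservative).measure_inter_frequently_image_mem_eq
        hU.measurableSet.nullMeasurableSet
      simp only [hit] at hrec
      rw [← hrec] at hpos
      apply hpos
      exact measure_mono_null inter_subset_right (measure_eq_zero_iff_ae_notMem.2 (by
        filter_upwards [h] with x hx hx'
        have : x ∈ (∅ : Set UnitAddCircle) := hx.mp hx'
        exact this))
    · exact ae_eq_univ.1 h
  exact ⟨Measure.dense_of_ae (μ := volume) hvol, hGδ, hvol⟩

/-- circle-level entropy estimate from the horseshoe -/
lemma aux_entropy_gt {d : ℕ} {F B : ℝ → ℝ} (h : Aux d F B) (hF0 : F 0 = 0) (hB : ¬ Monotone B)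
    (f : UnitAddCircle → UnitAddCircle) (z : ℝ)
    (hf : ∀ x : ℝ, f ((x + z : ℝ) : UnitAddCircle) = ((F x + z : ℝ) : UnitAddCircle)) :
    (Real.log d : EReal) < Dynamics.coverEntropy f Set.univ := by
  obtain ⟨x, y, hx0, hxy, hy1, hBxy⟩ : ∃ x y, 0 ≤ x ∧ x < y ∧ y ≤ 1 ∧ B y < B x := by
    by_contra hcon
    push Not at hcon
    exact hB (h.mono_of_Icc hcon)
  obtain ⟨N, hN, s1, s2, hcard, A, μ, hAc, hAn, hAd, hA1, hAcov⟩ := h.horseshoe hF0 hx0 hxy hy1 hBxy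
  set ψ : ℝ → UnitAddCircle := fun x => ((x + z : ℝ) : UnitAddCircle) with hψ
  have hψc : Continuous ψ := (AddCircle.continuous_mk' 1).comp (continuous_id.add continuous_const)
  have hψk : ∀ (x : ℝ) (k : ℤ), ψ (x + k) = ψ x := by
    intro x k
    simp only [hψ]
    rw [show x + k + z = x + z + k by ring, AddCircle.coe_add _ (x + z), aux_coe_int, add_zero]
  have hfψ : ∀ n x, f^[n] (ψ x) = ψ (F^[n] x) := by
    intro n x
    induction n with
    | zero => rfl
    | succ n ih => rw [Function.iterate_succ_apply', ih, Function.iterate_succ_apply']; exact hf _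
  have key := aux_entropy_lower f N hN (fun i => ψ '' A i)
    (fun i => ((hAc i).image hψc).isClosed) (by
      rintro i j _ ⟨u, hu, rfl⟩ ⟨v, hv, huv⟩
      obtain ⟨k, hk⟩ := aux_coe_eq huv
      have h1 := hA1 i hu
      have h2 := hA1 j hv
      have k1 : (k:ℝ) < 1 := by linarith [h1.1, h2.2]
      have k2 : (-1:ℝ) < k := by linarith [h1.2, h2.1]
      have k1 : k < 1 := by exact_mod_cast k1
      have k2 : -1 < k := by exact_mod_cast k2
      have : k = 0 := by omega
      subst this
      have : v = u := by simpa using hk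
      subst this
      exact hAd i j v hu hv) (by
      have main : ∀ r (w : Fin (r + 1) → (s1 ⊕ s2)), ∃ u ∈ A (w 0),
          ∀ k : Fin (r + 1), f^[N * k] (ψ u) ∈ ψ '' A (w k) := by
        intro r
        induction r with
        | zero =>
          intro w
          obtain ⟨u, hu⟩ := hAn (w 0)
          refine ⟨u, hu, fun k => ?_⟩
          have : k = 0 := by
            obtain ⟨k, hk⟩ := k
            have hk0 : k = 0 := by omega
            subst hk0
            rfl
          subst this
          exact ⟨u, hu, by simp⟩
        | succ r ih =>
          intro w
          obtain ⟨v, hv, hvk⟩ := ih (fun k => w k.succ)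
          obtain ⟨u, hu, huv⟩ := hAcov (w 0) _ v hv
          refine ⟨u, hu, fun k => ?_⟩
          refine Fin.cases ?_ (fun k => ?_) k
          · exact ⟨u, hu, by simp⟩
          · have e : f^[N * (k.succ : Fin (r + 2))] (ψ u) = f^[N * k] (ψ v) := by
              rw [Fin.val_succ, mul_add, mul_one, Function.iterate_add_apply, hfψ N, huv, hψk]
            rw [e]
            exact hvk k
      intro r w
      cases r with
      | zero => exact ⟨0, fun k => k.elim0⟩
      | succ r =>
        obtain ⟨u, -, hu⟩ := main r w
        exact ⟨ψ u, hu⟩)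
  have hd0 : (0:ℝ) < d := by linarith [h.d1]
  have hlt : (((N : ℝ) * Real.log d : ℝ) : EReal) < ENNReal.log (Fintype.card (s1 ⊕ s2) : ENNReal) := by
    have hc0 : (0:ℝ) < (Fintype.card (s1 ⊕ s2) : ℝ) := by
      exact_mod_cast lt_of_le_of_lt (Nat.zero_le _) hcard
    rw [← ENNReal.ofReal_natCast, ENNReal.log_ofReal_of_pos hc0, EReal.coe_lt_coe_iff,
      ← Real.log_pow]
    apply Real.log_lt_log (by positivity)
    exact_mod_cast hcard
  by_contra hle
  push Not at hle
  have h2 : (N : EReal) * Dynamics.coverEntropy f Set.univ ≤ (((N : ℝ) * Real.log d : ℝ) : EReal) := by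
    rw [EReal.coe_mul]
    exact mul_le_mul_of_nonneg_left hle (by positivity)
  exact absurd (hlt.trans_le (key.trans h2)) (lt_irrefl _)


lemma aux_cantor : Cardinal.aleph0 < Cardinal.mk (ℕ → Bool) := by
  simp [Cardinal.aleph0_lt_continuum]

/-- For a continuous degree-`d` circle map `f` (with lift `F`) admitting a light
semiconjugacy `β` (with degree-one lift `B`) onto `θ ↦ dθ`, the following are equivalent:
(a) `F` is not injective; (b) `β` is not injective; (c) there is a dense, full measure
`G_δ`-set `Λ` of points whose `β`-fibers are totally disconnected and uncountable;
(d) `h_top(f) > log d`; (e) on every nondegenerate closed arc the (lift of the)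
semiconjugacy `β` is not of bounded variation. -/
theorem stmt19 (d : ℕ) (hd : 2 ≤ d)
    (f : UnitAddCircle → UnitAddCircle) (hf : Continuous f)
    (F : ℝ → ℝ) (hFcont : Continuous F)
    (hFlift : ∀ x : ℝ, ((F x : ℝ) : UnitAddCircle) = f (x : UnitAddCircle))
    (hFdeg : ∀ x : ℝ, F (x + 1) = F x + d)
    (β : UnitAddCircle → UnitAddCircle) (hβcont : Continuous β)
    (B : ℝ → ℝ) (hBcont : Continuous B)
    (hBlift : ∀ x : ℝ, ((B x : ℝ) : UnitAddCircle) = β (x : UnitAddCircle))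
    (hBdeg : ∀ x : ℝ, B (x + 1) = B x + 1)
    (hsemi : ∀ θ : UnitAddCircle, β (f θ) = (d : ℤ) • β θ)
    (hlight : ∀ θ : UnitAddCircle, IsTotallyDisconnected (β ⁻¹' {θ})) :
    List.TFAE [
      ¬ Function.Injective F,
      ¬ Function.Injective β,
      ∃ Λ : Set UnitAddCircle, Dense Λ ∧ IsGδ Λ ∧ volume Λᶜ = 0 ∧
        ∀ θ ∈ Λ, IsTotallyDisconnected (β ⁻¹' {θ}) ∧ ¬ (β ⁻¹' {θ}).Countable,
      (Real.log d : EReal) < Dynamics.coverEntropy f Set.univ,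
      ∀ a c : ℝ, a < c → c - a ≤ 1 → ¬ BoundedVariationOn B (Set.Icc a c)
    ] := by
  have hd1 : (2 : ℝ) ≤ d := by exact_mod_cast hd
  -- the normalised lift
  obtain ⟨k0, hk0⟩ : ∃ k0 : ℤ, ∀ x, B (F x) = d * B x + k0 := by
    have h1 : ∀ x, ∃ k : ℤ, B (F x) = d * B x + k := by
      intro x
      apply aux_coe_eq
      rw [hBlift, hFlift, hsemi, ← hBlift, ← AddCircle.coe_zsmul]
      simp
    choose k hk using h1
    have hkc : Continuous k := by
      rw [Int.isClosedEmbedding_coe_real.isEmbedding.continuous_iff]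
      have : (Int.cast ∘ k : ℝ → ℝ) = fun x => B (F x) - d * B x := by
        funext x
        have := hk x
        simp only [Function.comp]
        linarith
      rw [this]
      fun_prop
    refine ⟨k 0, fun x => ?_⟩
    rw [hk x, PreconnectedSpace.constant inferInstance hkc (x := x) (y := 0)]
  have hBk : ∀ x (k : ℤ), B (x + k) = B x + k := by
    intro x k
    rw [Aux.shift_int hBdeg]; ring
  have hnc : ∀ a c, a < c → ∃ x ∈ Set.Icc a c, B x ≠ B a := by
    intro a c hac
    by_contra! hcon
    have hac' : a < min c (a + 1 / 2) := lt_min hac (by linarith)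
    have hpre : IsPreconnected ((fun x : ℝ => (x : UnitAddCircle)) '' Set.Icc a (min c (a + 1 / 2))) :=
      isPreconnected_Icc.image _ (AddCircle.continuous_mk' 1).continuousOn
    have hsub := hlight (β (a : UnitAddCircle)) _ (by
      rintro _ ⟨x, hx, rfl⟩
      change β (x : UnitAddCircle) = β (a : UnitAddCircle)
      rw [← hBlift, ← hBlift, hcon x ⟨hx.1, hx.2.trans (min_le_left _ _)⟩]) hpre
    have he := hsub ⟨a, ⟨le_rfl, hac'.le⟩, rfl⟩ ⟨min c (a + 1 / 2), ⟨hac'.le, le_rfl⟩, rfl⟩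
    obtain ⟨k, hk⟩ := aux_coe_eq he
    have h2 := min_le_right c (a + 1 / 2)
    have h3 : (k : ℝ) < 0 := by linarith
    have h4 : (-1 : ℝ) < k := by linarith
    have h5 : k < 0 := by exact_mod_cast h3
    have h6 : -1 < k := by exact_mod_cast h4
    omega
  have h' : Aux d (fun x => F x - k0) B :=
    { hd := hd
      Fc := by fun_prop
      Bc := hBcont
      F1 := fun x => by simp only [hFdeg]; ring
      B1 := hBdeg
      BF := fun x => by
        have := hBk (F x - k0) k0
        rw [sub_add_cancel, hk0] at this
        linarith
      nc := hnc }
  obtain ⟨z, hz⟩ := aux_surj (G := fun x => F x - k0 - x) (D := (d : ℝ) - 1) (by fun_prop)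
    (by linarith) (fun x => by simp only [hFdeg]; ring) 0
  simp only at hz
  have h0 : Aux d (fun x => F (x + z) - k0 - z) (fun x => B (x + z)) :=
    { hd := hd
      Fc := by fun_prop
      Bc := by fun_prop
      F1 := fun x => by
        rw [show x + 1 + z = x + z + 1 by ring, hFdeg]; ring
      B1 := fun x => by
        rw [show x + 1 + z = x + z + 1 by ring, hBdeg]
      BF := fun x => by
        have := h'.BF (x + z)
        simp only [sub_add_cancel] at this ⊢
        exact this
      nc := fun a c hac => by
        obtain ⟨x, hx, hne⟩ := hnc (a + z) (c + z) (by linarith)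
        refine ⟨x - z, ⟨by linarith [hx.1], by linarith [hx.2]⟩, ?_⟩
        simpa using hne }
  have hFF : Function.Injective F ↔ Function.Injective (fun x => F x - k0) := by
    constructor
    · intro h x y hxy
      exact h (by simpa using hxy)
    · intro h x y hxy
      exact h (by simp [hxy])
  have hββ : Function.Injective β ↔ Function.Injective B := by
    constructor
    · intro h x y hxy
      have h1 : (x : UnitAddCircle) = y := h (by rw [← hBlift, ← hBlift, hxy])
      obtain ⟨k, hk⟩ := aux_coe_eq h1
      rw [hk, hBk] at hxy
      have : (k : ℝ) = 0 := by linarith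
      rw [hk, this, add_zero]
    · intro h θ η hθ
      induction θ using QuotientAddGroup.induction_on with | _ x
      induction η using QuotientAddGroup.induction_on with | _ y
      have h1 : ((B x : ℝ) : UnitAddCircle) = ((B y : ℝ) : UnitAddCircle) := by
        rw [hBlift, hBlift]; exact hθ
      obtain ⟨k, hk⟩ := aux_coe_eq h1
      rw [← hBk] at hk
      have h2 := h hk
      change ((x : ℝ) : UnitAddCircle) = ((y : ℝ) : UnitAddCircle)
      rw [h2, AddCircle.coe_add, aux_coe_int, add_zero]
  have hFB : Function.Injective (fun x => F x - k0) ↔ Function.Injective B :=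
    ⟨fun h => (h'.B_mono_of_F h).injective, h'.F_inj_of_B⟩
  have hmono : ¬ Function.Injective β → ¬ Monotone B := by
    intro h hm
    exact h (hββ.2 (h'.strictMono_of_monotone hm).injective)
  tfae_have 1 ↔ 2 := by
    rw [hFF, hFB, hββ]
  tfae_have 2 → 3 := by
    intro hn
    have hm := hmono hn
    simp only [Monotone, not_forall, not_le] at hm
    obtain ⟨x, y, hxy, hB⟩ := hm
    have hxy' : x < y := lt_of_le_of_ne hxy (by rintro rfl; exact lt_irrefl _ hB)
    obtain ⟨p, q, hpq, hbr⟩ := h'.branch hxy' hB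
    have hU : IsOpen ((fun x : ℝ => (x : UnitAddCircle)) '' Set.Ioo p q) :=
      QuotientAddGroup.isOpenMap_coe _ isOpen_Ioo
    obtain ⟨r1, r2, r3⟩ := aux_recurrent d hd hU
      ((Set.nonempty_Ioo.2 hpq).image _)
    refine ⟨_, r1, r2, r3, fun θ hθ => ⟨hlight θ, ?_⟩⟩
    induction θ using QuotientAddGroup.induction_on with | _ T
    obtain ⟨Φ, hΦ, hΦB⟩ := hbr T (by
      refine Filter.Frequently.mono hθ ?_
      rintro n ⟨t, ht, htn⟩
      have h1 : ((t : ℝ) : UnitAddCircle) = ((d ^ n * T : ℝ) : UnitAddCircle) := by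
        change ((t : ℝ) : UnitAddCircle) = (d ^ n : ℕ) • ((T : ℝ) : UnitAddCircle) at htn
        rw [htn, ← AddCircle.coe_nsmul]
        simp
      obtain ⟨k, hk⟩ := aux_coe_eq h1
      refine ⟨-k, ?_⟩
      have : (d : ℝ) ^ n * T - ((-k : ℤ) : ℝ) = t := by push_cast; linarith
      rw [this]
      exact ht)
    intro hc
    have hinj : Function.Injective (fun ω => ((Φ ω : ℝ) : UnitAddCircle)) := by
      intro ω ω' hω
      obtain ⟨k, hk⟩ := aux_coe_eq hω
      have h1 := hΦB ω
      rw [hk, hBk, hΦB] at h1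
      have : (k : ℝ) = 0 := by linarith
      exact hΦ (by rw [hk, this, add_zero])
    have h2 := hc.preimage_of_injOn (f := fun ω => ((Φ ω : ℝ) : UnitAddCircle)) hinj.injOn
    have h3 : (fun ω => ((Φ ω : ℝ) : UnitAddCircle)) ⁻¹' (β ⁻¹' {((T : ℝ) : UnitAddCircle)})
        = Set.univ := by
      ext ω
      simp only [Set.mem_preimage, Set.mem_singleton_iff, Set.mem_univ, iff_true]
      rw [← hBlift, hΦB]
    have h4 : (Set.univ : Set (ℕ → Bool)).Countable := by
      rw [← h3]; exact h2
    rw [Set.countable_univ_iff] at h4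
    have h5 := Cardinal.mk_le_aleph0_iff.2 h4
    exact absurd h5 (not_le.2 aux_cantor)
  tfae_have 3 → 2 := by
    rintro ⟨Λ, hΛ, -, -, h⟩ hinj
    obtain ⟨θ, hθ⟩ := hΛ.nonempty
    refine (h θ hθ).2 (Set.Subsingleton.countable ?_)
    intro a ha b hb
    exact hinj (ha.trans hb.symm)
  tfae_have 2 → 4 := by
    intro hn
    have hm := hmono hn
    refine aux_entropy_gt h0 ?_ ?_ f z ?_
    · simp only [zero_add]; exact hz
    · intro h
      refine hm fun x y hxy => ?_
      have := h (show x - z ≤ y - z by linarith)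
      simpa using this
    · intro x
      rw [← hFlift, sub_add_cancel, AddCircle.coe_sub, aux_coe_int, sub_zero]
  tfae_have 4 → 2 := by
    intro hent hinj
    have hsurj : Function.Surjective β := by
      intro θ
      induction θ using QuotientAddGroup.induction_on with | _ T
      obtain ⟨x, hx⟩ := aux_surj hBcont le_rfl hBdeg T
      exact ⟨x, by rw [← hBlift, hx]⟩
    let e := Equiv.ofBijective β ⟨hinj, hsurj⟩
    have hec : Continuous e := hβcont
    let e' := hec.homeoOfEquivCompactToT2
    have hsc : Function.Semiconj e'.symm (fun θ : UnitAddCircle => (d : ℤ) • θ) f := by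
      intro θ
      apply e'.injective
      rw [e'.apply_symm_apply]
      have h1 : e' (f (e'.symm θ)) = (d : ℤ) • e' (e'.symm θ) := hsemi _
      rw [h1, e'.apply_symm_apply]
    have h1 := Dynamics.coverEntropy_image_le_of_uniformContinuous hsc
      (CompactSpace.uniformContinuous_of_continuous e'.symm.continuous) Set.univ
    rw [Set.image_univ, e'.symm.surjective.range_eq] at h1
    exact absurd (h1.trans (aux_entropy_upper d hd)) (not_le.2 hent)
  tfae_have 1 → 5 := by
    intro hn a c hac _
    rw [hFF] at hn
    simp only [Function.Injective, not_forall] at hn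
    obtain ⟨u, v, huv, hne⟩ := hn
    wlog hlt : u < v generalizing u v
    · exact this v u huv.symm (Ne.symm hne) (lt_of_le_of_ne (not_lt.1 hlt) (Ne.symm hne))
    by_cases hv : v ≤ u + 1
    · exact h'.not_bv hlt hv huv.symm.le hac
    · push Not at hv
      set m : ℤ := ⌈v - u⌉ - 1 with hm
      have h1 := Int.le_ceil (v - u)
      have h2 := Int.ceil_lt_add_one (v - u)
      have hm' : (m : ℝ) = ⌈v - u⌉ - 1 := by rw [hm]; push_cast; ring
      have h3 := h'.Fk (v - m) m
      rw [sub_add_cancel] at h3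
      have h4 : (0 : ℝ) ≤ m * d := by
        apply mul_nonneg
        · have : (0 : ℝ) < m := by linarith
          exact this.le
        · positivity
      exact h'.not_bv (x := u) (y := v - m) (by linarith) (by linarith) (by linarith) hac
  tfae_have 5 → 1 := by
    intro h hinj
    have hs := h'.B_mono_of_F (hFF.1 hinj)
    refine h 0 1 one_pos (by norm_num) ?_
    have h1 := (hs.monotone.monotoneOn (Set.Icc (0 : ℝ) 1)).eVariationOn_eq
      (a := 0) (b := 1) (by simp) (by simp)
    rw [Set.inter_self] at h1
    unfold BoundedVariationOn
    rw [h1]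
    exact ENNReal.ofReal_ne_top
  tfae_finish
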